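/- Let E ⊂ ℝ^{N×n} be a bounded set and for δ > 0 let E_δ be compact sets such that Rco_f E_δ ⊂ int Rco_f E and: (i) for every ε > 0 there exists δ_0 > 0 such that dist(η; E) ≤ ε for all η ∈ E_δ and all δ ∈ (0, δ_0]; (ii) if η ∈ int Rco_f E then there exists δ_0 > 0 such that η ∈ Rco_f E_δ for all δ ∈ (0, δ_0]. Then: for every δ > 0 and every ξ ∈ Rco_f E_δ there exist I ∈ ℕ and pairs (λ_i, ξ_i), i = 1,…,I, with λ_i > 0, Σ_{i=1}^I λ_i = 1, ξ_i ∈ ℝ^{N×n}, satisfying (H_I(int Rco_f E)), such that ξ = Σ_{i=1}^I λ_i ξ_i and Σ_{i : ξ_i ∉ B_δ(E)} λ_i < δ. -/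

import Mathlib

open MeasureTheory Filter

attribute [local instance] Classical.propDecidable
attribute [local instance] Matrix.frobeniusNormedAddCommGroup Matrix.frobeniusNormedSpace

noncomputable section

/-- The space of real `N × n` matrices. -/
abbrev Mat (N n : ℕ) : Type := Matrix (Fin N) (Fin n) ℝ

/-- A function `f : ℝ^{N×n} → ℝ` is rank one convex. -/
def RankOneConvexFun {N n : ℕ} (f : Mat N n → ℝ) : Prop :=
  ∀ lam ∈ Set.Icc (0:ℝ) 1, ∀ ξ η : Mat N n, (ξ - η).rank = 1 →
    f (lam • ξ + (1 - lam) • η) ≤ lam * f ξ + (1 - lam) * f η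

/-- The hull `Rco_f E`. -/
def RcoF {N n : ℕ} (E : Set (Mat N n)) : Set (Mat N n) :=
  {ξ | ∀ f : Mat N n → ℝ, RankOneConvexFun f → (∀ η ∈ E, f η ≤ 0) → f ξ ≤ 0}

/-- A set of matrices is rank one convex. -/
def RankOneConvexSet {N n : ℕ} (S : Set (Mat N n)) : Prop :=
  ∀ A ∈ S, ∀ B ∈ S, (A - B).rank = 1 → ∀ t ∈ Set.Icc (0:ℝ) 1, t • A + (1 - t) • B ∈ S

/-- The property `(H_I(U))`, phrased on lists of (weight, matrix) pairs. -/
inductive HIProp {N n : ℕ} (U : Set (Mat N n)) : List (ℝ × Mat N n) → Prop where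
  | single (l : ℝ) (ξ : Mat N n) (hξ : ξ ∈ U) : HIProp U [(l, ξ)]
  | pair (l₁ l₂ : ℝ) (ξ₁ ξ₂ : Mat N n) (h₁ : ξ₁ ∈ U) (h₂ : ξ₂ ∈ U)
      (hrank : (ξ₁ - ξ₂).rank = 1) : HIProp U [(l₁, ξ₁), (l₂, ξ₂)]
  | step (L rest : List (ℝ × Mat N n)) (l₁ l₂ : ℝ) (ξ₁ ξ₂ : Mat N n)
      (hperm : L.Perm ((l₁, ξ₁) :: (l₂, ξ₂) :: rest)) (hrest : rest ≠ [])
      (h₁ : ξ₁ ∈ U) (h₂ : ξ₂ ∈ U) (hrank : (ξ₁ - ξ₂).rank = 1)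
      (hrec : HIProp U ((l₁ + l₂, ((l₁ + l₂)⁻¹) • (l₁ • ξ₁ + l₂ • ξ₂)) :: rest)) :
      HIProp U L

/-- The family `(λ_i, ξ_i)_{1 ≤ i ≤ I}` satisfies `(H_I(U))`. -/
def SatisfiesH {N n : ℕ} (U : Set (Mat N n)) (I : ℕ) (l : Fin I → ℝ)
    (ξ : Fin I → Mat N n) : Prop :=
  HIProp U (List.ofFn fun i => (l i, ξ i))

/-- The gradient of a map `u : ℝ^n → ℝ^N`, as an `N × n` matrix. -/
def matGrad {N n : ℕ} (u : (Fin n → ℝ) → Fin N → ℝ) (x : Fin n → ℝ) : Mat N n :=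
  LinearMap.toMatrix' (fderiv ℝ u x).toLinearMap

/-- `u` is affine on the set `s`. -/
def AffineOn {N n : ℕ} (u : (Fin n → ℝ) → Fin N → ℝ) (s : Set (Fin n → ℝ)) : Prop :=
  ∃ (A : Mat N n) (b : Fin N → ℝ), ∀ x ∈ s, u x = A.mulVec x + b

/-- `u` is piecewise affine on the open set `Ω`. -/
def PiecewiseAffineOn {N n : ℕ} (u : (Fin n → ℝ) → Fin N → ℝ)
    (Ω : Set (Fin n → ℝ)) : Prop :=
  ContinuousOn u (closure Ω) ∧
  ∃ P : ℕ → Set (Fin n → ℝ),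
    (∀ k, IsOpen (P k)) ∧ (∀ k, P k ⊆ Ω) ∧
    (∀ k l, k ≠ l → Disjoint (P k) (P l)) ∧
    volume (Ω \ ⋃ k, P k) = 0 ∧ ∀ k, AffineOn u (P k)

/-- `u` is piecewise `C¹` on the open set `Ω`. -/
def PiecewiseC1On {N n : ℕ} (u : (Fin n → ℝ) → Fin N → ℝ)
    (Ω : Set (Fin n → ℝ)) : Prop :=
  ContinuousOn u (closure Ω) ∧
  ∃ P : ℕ → Set (Fin n → ℝ),
    (∀ k, IsOpen (P k)) ∧ (∀ k, P k ⊆ Ω) ∧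
    (∀ k l, k ≠ l → Disjoint (P k) (P l)) ∧
    volume (Ω \ ⋃ k, P k) = 0 ∧ ∀ k, ContDiffOn ℝ 1 u (P k)

/-- `u ∈ φ + W₀^{1,∞}(Ω; ℝ^N)`: `u` is Lipschitz on `closure Ω` and agrees with `φ`
on the boundary of `Ω`. -/
def MemW01inf {N n : ℕ} (Ω : Set (Fin n → ℝ)) (φ u : (Fin n → ℝ) → Fin N → ℝ) : Prop :=
  (∃ C : NNReal, LipschitzOnWith C u (closure Ω)) ∧ ∀ x ∈ frontier Ω, u x = φ x

/-- `K` has the relaxation property with respect to `E`. -/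
def HasRelaxationProperty {N n : ℕ} (K E : Set (Mat N n)) : Prop :=
  ∀ Ω : Set (Fin n → ℝ), IsOpen Ω → Bornology.IsBounded Ω →
    ∀ ξ ∈ K, ∀ b : Fin N → ℝ,
      ∃ u : ℕ → (Fin n → ℝ) → Fin N → ℝ,
        (∀ ν, PiecewiseAffineOn (u ν) Ω) ∧
        (∀ ν, MemW01inf Ω (fun x => ξ.mulVec x + b) (u ν)) ∧
        (∀ ν, ∀ᵐ x ∂(volume.restrict Ω), matGrad (u ν) x ∈ E ∪ K) ∧
        (∃ C : NNReal, ∀ ν, LipschitzOnWith C (u ν) (closure Ω)) ∧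
        TendstoUniformlyOn u (fun x => ξ.mulVec x + b) atTop (closure Ω) ∧
        Tendsto (fun ν => ∫ x in Ω, Metric.infDist (matGrad (u ν) x) E) atTop (nhds 0)

/-- The singular values of a square matrix, in nondecreasing order:
the square roots of the eigenvalues of `ξ ξᵀ`, sorted. -/
def singularValues {n : ℕ} (ξ : Matrix (Fin n) (Fin n) ℝ) (i : Fin n) : ℝ :=
  Real.sqrt ((Matrix.isHermitian_mul_conjTranspose_self ξ).eigenvalues
    (Tuple.sort (Matrix.isHermitian_mul_conjTranspose_self ξ).eigenvalues i))

end
theorem topo_eq (N n : ℕ) : (Matrix.frobeniusNormedAddCommGroup (m := Fin N) (n := Fin n) (α := ℝ)).toMetricSpace.toPseudoMetricSpace.toUniformSpace.toTopologicalSpace = instTopologicalSpaceMatrix := by rfl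
theorem cb {N n : ℕ} (R : ℝ) : IsCompact (Metric.closedBall (0 : Mat N n) R) := by
  have := isCompact_closedBall (0 : Mat N n) R
  exact this
theorem bdd {N n : ℕ} (K : Set (Mat N n)) (hK : IsCompact K) : ∃ R, ∀ x ∈ K, ‖x‖ ≤ R := by
  exact (IsCompact.isBounded (α := Mat N n) hK).exists_norm_le
theorem rank_smul_one {N n : ℕ} (c : ℝ) (hc : c ≠ 0) (A : Mat N n) : (c • A).rank = A.rank := by
  exact Matrix.rank_smul_of_mem_nonZeroDivisors _ (mem_nonZeroDivisors_of_ne_zero hc)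
theorem rank_single {N n : ℕ} (c : ℝ) (hc : c ≠ 0) (i : Fin N) (j : Fin n) : (Matrix.single i j c).rank = 1 := by
  apply le_antisymm
  · have := Matrix.rank_vecMulVec_le (Pi.single i c) (Pi.single j (1:ℝ))
    have e : Matrix.single i j c = Matrix.vecMulVec (Pi.single i c) (Pi.single j (1:ℝ)) := by
      ext k l
      simp only [Matrix.single_apply, Matrix.vecMulVec_apply, Pi.single_apply]
      by_cases h1 : k = i <;> by_cases h2 : l = j <;>
        simp [h1, h2, Ne.symm, eq_comm (a := i) (b := k), eq_comm (a := j) (b := l)]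
    rw [e]; exact this
  · by_contra h
    have h : (Matrix.single i j c).rank = 0 := by omega
    rw [Matrix.rank, Module.finrank_eq_zero_iff_of_free (R := ℝ)] at h
    have := h.elim ⟨_, LinearMap.mem_range_self _ (Pi.single j 1)⟩ 0
    have := congrFun (congrArg Subtype.val this) i
    simp at this
    exact hc this

section
variable {N n : ℕ}

theorem roc_line {f : Mat N n → ℝ} (hf : RankOneConvexFun f) (A B : Mat N n) (h : (A - B).rank = 1) :
    ConvexOn ℝ Set.univ (fun t : ℝ => f (t • A + (1 - t) • B)) := by
  refine ⟨convex_univ, ?_⟩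
  intro s _ t _ a b ha hb hab
  obtain rfl : b = 1 - a := by linarith
  by_cases hst : s = t
  · subst hst
    simp only [smul_eq_mul]
    have : a * s + (1 - a) * s = s := by ring
    rw [this]; apply le_of_eq; ring
  · have := hf a ⟨ha, by linarith⟩ (s • A + (1 - s) • B) (t • A + (1 - t) • B) (by
      have : (s • A + (1 - s) • B) - (t • A + (1 - t) • B) = (s - t) • (A - B) := by module
      rw [this, rank_smul_one _ (sub_ne_zero.2 hst), h])
    simp only [smul_eq_mul]
    have e : (a * s + (1 - a) * t) • A + (1 - (a * s + (1 - a) * t)) • B =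
        a • (s • A + (1 - s) • B) + (1 - a) • (t • A + (1 - t) • B) := by module
    rw [e]; exact this

theorem roc_line_cont {f : Mat N n → ℝ} (hf : RankOneConvexFun f) (A B : Mat N n) (h : (A - B).rank = 1) :
    Continuous (fun t : ℝ => f (t • A + (1 - t) • B)) := 
  continuousOn_univ.1 ((roc_line hf A B h).continuousOn isOpen_univ)

theorem roc_max {f g : Mat N n → ℝ} (hf : RankOneConvexFun f) (hg : RankOneConvexFun g) :
    RankOneConvexFun (fun x => max (f x) (g x)) := by
  intro a ha x y hxy
  have h1 := hf a ha x y hxy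
  have h2 := hg a ha x y hxy
  have ha0 := ha.1
  have ha1 : 0 ≤ 1 - a := by linarith [ha.2]
  apply max_le
  · refine h1.trans ?_
    gcongr <;> apply le_max_left
  · refine h2.trans ?_
    gcongr <;> apply le_max_right

theorem roc_smul {f : Mat N n → ℝ} (hf : RankOneConvexFun f) (c : ℝ) (hc : 0 ≤ c) :
    RankOneConvexFun (fun x => c * f x) := by
  intro a ha x y hxy
  have := mul_le_mul_of_nonneg_left (hf a ha x y hxy) hc
  simp only
  linarith

theorem roc_norm (R : ℝ) : RankOneConvexFun (fun x : Mat N n => ‖x‖ - R) := by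
  intro a ha x y hxy
  have ha1 : 0 ≤ 1 - a := by linarith [ha.2]
  have := norm_add_le (a • x) ((1 - a) • y)
  rw [norm_smul, norm_smul, Real.norm_of_nonneg ha.1, Real.norm_of_nonneg ha1] at this
  simp only
  linarith

/-- update entry -/
def upd (x : Mat N n) (p : Fin N × Fin n) (t : ℝ) : Mat N n :=
  fun i j => if (i, j) = p then t else x i j

theorem roc_upd {f : Mat N n → ℝ} (hf : RankOneConvexFun f) (x : Mat N n) (p) (s t a : ℝ) (ha : a ∈ Set.Icc (0:ℝ) 1) :
    f (upd x p (a * s + (1 - a) * t)) ≤ a * f (upd x p s) + (1 - a) * f (upd x p t) := by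
  by_cases hst : s = t
  · subst hst
    have : a * s + (1 - a) * s = s := by ring
    rw [this]; apply le_of_eq; ring
  · have := hf a ha (upd x p s) (upd x p t) (by
      rw [← rank_single (s - t) (sub_ne_zero.2 hst) p.1 p.2]
      congr 1
      ext i j
      obtain ⟨k, l⟩ := p
      simp only [upd, Matrix.sub_apply, Matrix.single_apply, Prod.mk.injEq]
      by_cases h : i = k ∧ j = l
      · simp [h]
      · rw [if_neg h, if_neg h, if_neg (fun h' => h ⟨h'.1.symm, h'.2.symm⟩), sub_self])
    convert this using 2
    ext i j
    simp only [upd, Matrix.add_apply, Matrix.smul_apply, smul_eq_mul]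
    split_ifs
    · rfl
    · ring

theorem upd_self (x : Mat N n) (p : Fin N × Fin n) : upd x p (x p.1 p.2) = x := by
  ext i j
  simp only [upd]
  split_ifs with h
  · subst h; rfl
  · rfl

theorem roc_bdd {f : Mat N n → ℝ} (hf : RankOneConvexFun f) (S : Finset (Fin N × Fin n)) :
    ∀ x : Mat N n, ∃ M, ∀ y : Mat N n, (∀ p ∈ S, |y p.1 p.2 - x p.1 p.2| ≤ 1) →
      (∀ p ∉ S, y p.1 p.2 = x p.1 p.2) → f y ≤ M := by
  induction S using Finset.induction_on with
  | empty =>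
    intro x
    refine ⟨f x, fun y _ h => ?_⟩
    have : y = x := by ext i j; exact h (i, j) (by simp)
    rw [this]
  | insert p S hp ih =>
    intro x
    obtain ⟨M1, h1⟩ := ih (upd x p (x p.1 p.2 + 1))
    obtain ⟨M2, h2⟩ := ih (upd x p (x p.1 p.2 - 1))
    refine ⟨max M1 M2, fun y hy hy' => ?_⟩
    have h1 := h1 (upd y p (x p.1 p.2 + 1)) (fun q hq => by
      have : q ≠ p := fun h => hp (h ▸ hq)
      simpa [upd, this] using hy q (Finset.mem_insert_of_mem hq)) (fun q hq => by
      by_cases h : q = p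
      · simp [upd, h]
      · simpa [upd, h] using hy' q (by simp [h, hq]))
    have h2 := h2 (upd y p (x p.1 p.2 - 1)) (fun q hq => by
      have : q ≠ p := fun h => hp (h ▸ hq)
      simpa [upd, this] using hy q (Finset.mem_insert_of_mem hq)) (fun q hq => by
      by_cases h : q = p
      · simp [upd, h]
      · simpa [upd, h] using hy' q (by simp [h, hq]))
    have hb := abs_le.1 (hy p (Finset.mem_insert_self _ _))
    have ha : (y p.1 p.2 - x p.1 p.2 + 1) / 2 ∈ Set.Icc (0:ℝ) 1 := ⟨by linarith, by linarith⟩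
    have := roc_upd hf y p (x p.1 p.2 + 1) (x p.1 p.2 - 1) _ ha
    have e : (y p.1 p.2 - x p.1 p.2 + 1) / 2 * (x p.1 p.2 + 1) +
        (1 - (y p.1 p.2 - x p.1 p.2 + 1) / 2) * (x p.1 p.2 - 1) = y p.1 p.2 := by ring
    rw [e, upd_self] at this
    refine this.trans ?_
    have e1 := mul_le_mul_of_nonneg_left (h1.trans (le_max_left M1 M2)) ha.1
    have e2 := mul_le_mul_of_nonneg_left (h2.trans (le_max_right M1 M2)) (by linarith [ha.2] : 0 ≤ 1 - (y p.1 p.2 - x p.1 p.2 + 1) / 2)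
    linarith

/-- lower bound -/
theorem roc_low {f : Mat N n → ℝ} (hf : RankOneConvexFun f) (x : Mat N n) (M : ℝ)
    (hM : ∀ y : Mat N n, (∀ p : Fin N × Fin n, |y p.1 p.2 - x p.1 p.2| ≤ 1) → f y ≤ M)
    (r : ℝ) (hr : 0 ≤ r) (hr1 : r < 1) (S : Finset (Fin N × Fin n)) :
    ∀ y : Mat N n, (∀ p ∈ S, |y p.1 p.2 - x p.1 p.2| ≤ r) →
      (∀ p ∉ S, y p.1 p.2 = x p.1 p.2) → (1 - r) ^ S.card * (M - f y) ≤ M - f x := by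
  induction S using Finset.induction_on with
  | empty =>
    intro y _ h
    have : y = x := by ext i j; exact h (i, j) (by simp)
    rw [this]; simp
  | insert p S hp ih =>
    intro y hy hy'
    have h1 := ih (upd y p (x p.1 p.2)) (fun q hq => by
      have : q ≠ p := fun h => hp (h ▸ hq)
      simpa [upd, this] using hy q (Finset.mem_insert_of_mem hq)) (fun q hq => by
      by_cases h : q = p
      · simp [upd, h]
      · simpa [upd, h] using hy' q (by simp [h, hq]))
    rw [Finset.card_insert_of_notMem hp]
    have key : (1 - r) * (M - f y) ≤ M - f (upd y p (x p.1 p.2)) := by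
      have hb := abs_le.1 (hy p (Finset.mem_insert_self _ _))
      have hq : ∀ q : Fin N × Fin n, |y q.1 q.2 - x q.1 q.2| ≤ r := fun q => by
        by_cases h : q ∈ insert p S
        · exact hy q h
        · rw [hy' q h]; simpa using hr
      have hyM : f y ≤ M := hM y (fun q => (hq q).trans hr1.le)
      -- the far point
      have far : ∀ s : ℝ, |s| ≤ 1 → f (upd y p (x p.1 p.2 + s)) ≤ M := by
        intro s hs
        apply hM
        intro q
        by_cases h : q = p
        · simpa [upd, h] using hs
        · simpa [upd, h] using (hq q).trans hr1.le
      have gen : ∃ s a : ℝ, |s| ≤ 1 ∧ 0 ≤ a ∧ a ≤ r ∧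
          x p.1 p.2 = a * (x p.1 p.2 + s) + (1 - a) * y p.1 p.2 := by
        set d := y p.1 p.2 - x p.1 p.2 with hd
        have hyd : y p.1 p.2 = x p.1 p.2 + d := by rw [hd]; ring
        rw [hyd]
        rcases le_total 0 d with h | h
        · refine ⟨-1, d / (1 + d), by simp, by positivity, ?_, by field_simp; ring⟩
          rw [div_le_iff₀ (by positivity)]
          nlinarith
        · have : 0 < 1 - d := by linarith
          refine ⟨1, -d / (1 - d), by simp, div_nonneg (by linarith) this.le, ?_, by field_simp; ring⟩
          rw [div_le_iff₀ this]
          nlinarith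
      obtain ⟨s, a, hs, ha, har, e⟩ := gen
      have := roc_upd hf y p (x p.1 p.2 + s) (y p.1 p.2) a ⟨ha, by linarith⟩
      rw [← e, upd_self] at this
      have h3 := mul_le_mul_of_nonneg_left (far s hs) ha
      nlinarith
    calc _ = (1 - r) ^ S.card * ((1 - r) * (M - f y)) := by ring
      _ ≤ (1 - r) ^ S.card * (M - f (upd y p (x p.1 p.2))) := by
        apply mul_le_mul_of_nonneg_left key
        have : 0 ≤ 1 - r := by linarith
        positivity
      _ ≤ _ := h1

theorem roc_lsc {f : Mat N n → ℝ} (hf : RankOneConvexFun f) (x : Mat N n) (c : ℝ) (hc : c < f x) :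
    {y | c < f y} ∈ nhds x := by
  obtain ⟨M, hM⟩ := roc_bdd hf Finset.univ x
  have hM : ∀ y : Mat N n, (∀ p : Fin N × Fin n, |y p.1 p.2 - x p.1 p.2| ≤ 1) → f y ≤ M :=
    fun y hy => hM y (fun p _ => hy p) (by simp)
  have hev : ∀ᶠ r in nhdsWithin (0:ℝ) (Set.Ioi 0),
      M - f x < (1 - r) ^ (Finset.univ : Finset (Fin N × Fin n)).card * (M - c) := by
    apply Filter.Eventually.filter_mono nhdsWithin_le_nhds
    have : ContinuousAt (fun r : ℝ => (1 - r) ^ (Finset.univ : Finset (Fin N × Fin n)).card * (M - c)) 0 := by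
      fun_prop
    apply this.eventually_const_lt
    simp; linarith
  obtain ⟨r, hr, hr0, hr1⟩ := (hev.and (Ioo_mem_nhdsGT (zero_lt_one))).exists
  have hn : ∀ p : Fin N × Fin n, ∀ᶠ y : Mat N n in nhds x, |y p.1 p.2 - x p.1 p.2| < r := by
    intro p
    have : Continuous (fun y : Mat N n => |y p.1 p.2 - x p.1 p.2|) := by fun_prop
    apply this.continuousAt.eventually_lt_const
    simpa using hr0
  filter_upwards [Filter.eventually_all.2 hn] with y hy
  have := roc_low hf x M hM r hr0.le hr1 Finset.univ y (fun p _ => (hy p).le) (by simp)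
  have h2 := lt_of_le_of_lt this hr
  have h3 := lt_of_mul_lt_mul_left h2 (by have : 0 ≤ 1 - r := by linarith
                                          positivity)
  show c < f y
  linarith
end
section
variable {N n : ℕ}

theorem exists_sep (K U : Set (Mat N n)) (hK : IsCompact K) (hU : IsOpen U) (hKU : RcoF K ⊆ U) :
    ∃ φ : Mat N n → ℝ, RankOneConvexFun φ ∧ (∀ x ∈ K, φ x ≤ 0) ∧ ∀ x ∉ U, 1 < φ x := by
  obtain ⟨R, hR⟩ := bdd K hK
  have hc : IsCompact (Metric.closedBall (0 : Mat N n) (R + 2) \ U) := (cb _).diff hU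
  have : ∃ φ : Mat N n → ℝ, RankOneConvexFun φ ∧ (∀ x ∈ K, φ x ≤ 0) ∧
      ∀ x ∈ Metric.closedBall (0 : Mat N n) (R + 2) \ U, 1 < φ x := by
    refine hc.induction_on (p := fun s => ∃ φ : Mat N n → ℝ, RankOneConvexFun φ ∧
      (∀ x ∈ K, φ x ≤ 0) ∧ ∀ x ∈ s, 1 < φ x) ?_ ?_ ?_ ?_
    · exact ⟨fun _ => 0, fun a _ x y _ => by simp, by simp, by simp⟩
    · rintro s t hst ⟨φ, h1, h2, h3⟩
      exact ⟨φ, h1, h2, fun x hx => h3 x (hst hx)⟩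
    · rintro s t ⟨φ, h1, h2, h3⟩ ⟨ψ, g1, g2, g3⟩
      refine ⟨_, roc_max h1 g1, fun x hx => max_le (h2 x hx) (g2 x hx), ?_⟩
      rintro x (hx | hx)
      · exact lt_max_of_lt_left (h3 x hx)
      · exact lt_max_of_lt_right (g3 x hx)
    · rintro x ⟨_, hx⟩
      have : x ∉ RcoF K := fun h => hx (hKU h)
      simp only [RcoF, Set.mem_ofPred_eq, not_forall, not_le] at this
      obtain ⟨f, hf, hfK, hfx⟩ := this
      have hg := roc_smul hf (2 / f x) (by positivity)
      refine ⟨_, mem_nhdsWithin_of_mem_nhds (roc_lsc hg x 1 ?_), _, hg, ?_, fun y hy => hy⟩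
      · rw [div_mul_cancel₀ _ hfx.ne']; norm_num
      · intro y hy
        exact mul_nonpos_of_nonneg_of_nonpos (by positivity) (hfK y hy)
  obtain ⟨φ, h1, h2, h3⟩ := this
  refine ⟨_, roc_max h1 (roc_norm R), fun x hx => max_le (h2 x hx) (by linarith [hR x hx]), ?_⟩
  intro x hx
  by_cases h : x ∈ Metric.closedBall (0 : Mat N n) (R + 2)
  · exact lt_max_of_lt_left (h3 x ⟨h, hx⟩)
  · apply lt_max_of_lt_right
    rw [mem_closedBall_zero_iff, not_le] at h
    linarith

/-- extension -/
theorem glue (U : Set (Mat N n)) (φ g : Mat N n → ℝ) (hφ : RankOneConvexFun φ)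
    (hφU : ∀ x ∉ U, 1 < φ x) (hg1 : ∀ x ∈ U, g x ≤ 1) (hg0 : ∀ x ∉ U, g x = 0)
    (hg : ∀ t ∈ Set.Ioo (0:ℝ) 1, ∀ A ∈ U, ∀ B ∈ U, (A - B).rank = 1 → t • A + (1 - t) • B ∈ U →
      g (t • A + (1 - t) • B) ≤ t * g A + (1 - t) * g B) :
    RankOneConvexFun (fun x => max (g x) (φ x)) := by
  -- one-sided
  have side : ∀ A B : Mat N n, (A - B).rank = 1 → ∀ lam ∈ Set.Icc (0:ℝ) 1,
      φ (lam • A + (1 - lam) • B) < 1 →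
      ∃ s ∈ Set.Icc lam 1, s • A + (1 - s) • B ∈ U ∧
        g (s • A + (1 - s) • B) ≤ s * max (g A) (φ A) + (1 - s) * max (g B) (φ B) := by
    intro A B hAB lam hl hP
    by_cases hA : A ∈ U
    · exact ⟨1, ⟨hl.2, le_rfl⟩, by simpa using hA, by simp⟩
    · have hA1 := hφU A hA
      obtain ⟨s, hs, hs1⟩ := intermediate_value_Icc hl.2 (roc_line_cont hφ A B hAB).continuousOn
        (show (1:ℝ) ∈ Set.Icc _ _ from ⟨hP.le, by simpa using hA1.le⟩)
      simp only at hs1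
      have hsU : s • A + (1 - s) • B ∈ U := by
        by_contra h
        exact (hφU _ h).ne' hs1
      refine ⟨s, hs, hsU, (hg1 _ hsU).trans ?_⟩
      have hs0 : 0 ≤ s := hl.1.trans hs.1
      have hs' : 0 ≤ 1 - s := by linarith [hs.2]
      have := hφ s ⟨hs0, hs.2⟩ A B hAB
      rw [hs1] at this
      refine this.trans ?_
      gcongr <;> apply le_max_right
  intro lam hl A B hAB
  have hl1 : 0 ≤ 1 - lam := by linarith [hl.2]
  have hφP : φ (lam • A + (1 - lam) • B) ≤ lam * max (g A) (φ A) + (1 - lam) * max (g B) (φ B) := by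
    refine (hφ lam hl A B hAB).trans ?_
    have := hl.1
    gcongr <;> apply le_max_right
  apply max_le _ hφP
  by_cases hlt : g (lam • A + (1 - lam) • B) ≤ φ (lam • A + (1 - lam) • B)
  · exact hlt.trans hφP
  push Not at hlt
  have hPU : lam • A + (1 - lam) • B ∈ U := by
    by_contra h
    have := hφU _ h
    rw [hg0 _ h] at hlt
    linarith
  have hP := hlt.trans_le (hg1 _ hPU)
  obtain ⟨s, hs, hsU, hsg⟩ := side A B hAB lam hl hP
  have hBA : (B - A).rank = 1 := by
    rw [← hAB, ← rank_smul_one (-1) (by norm_num) (A - B)]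
    congr 1; module
  obtain ⟨r, hr, hrU, hrg⟩ := side B A hBA (1 - lam) ⟨hl1, by linarith [hl.1]⟩ (by
    rw [sub_sub_cancel, add_comm]; exact hP)
  obtain ⟨t, rfl⟩ : ∃ t, r = 1 - t := ⟨1 - r, by ring⟩
  rw [sub_sub_cancel, add_comm] at hrU hrg
  have hr1 := hr.1
  have ht : t ≤ lam := by linarith
  rcases hs.1.eq_or_lt with h | h
  · subst h; exact hsg
  rcases ht.eq_or_lt with h' | h'
  · subst h'; linarith
  have hst : 0 < s - t := by linarith
  have key := hg ((lam - t) / (s - t)) ⟨div_pos (by linarith) hst, by rw [div_lt_one hst]; linarith⟩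
    _ hsU _ hrU (by
      have : (s • A + (1 - s) • B) - (t • A + (1 - t) • B) = (s - t) • (A - B) := by module
      rw [this, rank_smul_one _ hst.ne', hAB])
  set c := (lam - t) / (s - t) with hc
  have hcl : lam = c * s + (1 - c) * t := by rw [hc]; field_simp; ring
  have hc0 : 0 ≤ c := div_nonneg (by linarith) hst.le
  have hc1 : 0 ≤ 1 - c := by rw [sub_nonneg, hc, div_le_one hst]; linarith
  have e : c • (s • A + (1 - s) • B) + (1 - c) • (t • A + (1 - t) • B) = lam • A + (1 - lam) • B := by
    rw [hcl]; module
  rw [e] at key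
  refine (key hPU).trans ?_
  have e1 := mul_le_mul_of_nonneg_left hsg hc0
  have e2 := mul_le_mul_of_nonneg_left hrg hc1
  rw [hcl]
  linarith

/-- finite laminates -/
inductive Lam (U : Set (Mat N n)) : ℝ → Mat N n → List (ℝ × Mat N n) → Prop where
  | leaf (w : ℝ) (ξ : Mat N n) (hw : 0 < w) (hξ : ξ ∈ U) : Lam U w ξ [(w, ξ)]
  | node (w a b : ℝ) (A B P : Mat N n) (L₁ L₂ : List (ℝ × Mat N n)) (ha : 0 < a) (hb : 0 < b)
      (hw : w = a + b) (hAB : (A - B).rank = 1) (hP : w • P = a • A + b • B) (hPU : P ∈ U)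
      (h₁ : Lam U a A L₁) (h₂ : Lam U b B L₂) : Lam U w P (L₁ ++ L₂)

theorem Lam.memU {U : Set (Mat N n)} {w A L} (h : Lam U w A L) : A ∈ U := by
  cases h <;> assumption

theorem HI_perm {U : Set (Mat N n)} {L L' : List (ℝ × Mat N n)} (h : HIProp U L) (hp : L'.Perm L) :
    HIProp U L' := by
  cases h with
  | single l ξ hξ => rw [List.perm_singleton] at hp; subst hp; exact .single l ξ hξ
  | pair l₁ l₂ ξ₁ ξ₂ h₁ h₂ hr =>
    obtain ⟨x, y, rfl⟩ := List.length_eq_two.1 hp.length_eq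
    have hx : x ∈ [(l₁, ξ₁), (l₂, ξ₂)] := hp.subset (by simp)
    simp only [List.mem_cons, List.not_mem_nil, or_false] at hx
    rcases hx with rfl | rfl
    · rw [List.perm_cons, List.perm_singleton, List.singleton_inj] at hp
      subst hp; exact .pair _ _ _ _ h₁ h₂ hr
    · have hp := hp.trans (List.Perm.swap _ _ _)
      rw [List.perm_cons, List.perm_singleton, List.singleton_inj] at hp
      subst hp
      refine .pair _ _ _ _ h₂ h₁ ?_
      rw [← hr, ← rank_smul_one (-1) (by norm_num) (ξ₁ - ξ₂)]
      congr 1; module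
  | step _ rest l₁ l₂ ξ₁ ξ₂ hperm hrest h₁ h₂ hr hrec =>
    exact .step _ rest l₁ l₂ ξ₁ ξ₂ (hp.trans hperm) hrest h₁ h₂ hr hrec

theorem Lam.collapse {U : Set (Mat N n)} {w A L} (h : Lam U w A L) :
    ∀ rest, HIProp U ((w, A) :: rest) → HIProp U (L ++ rest) := by
  induction h with
  | leaf w ξ hw hξ => intro rest h; exact h
  | node w a b A B P L₁ L₂ ha hb hw hAB hP hPU h₁ h₂ ih₁ ih₂ =>
    intro rest h
    have h3 : HIProp U ((a, A) :: (b, B) :: rest) := by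
      by_cases hr : rest = []
      · subst hr; exact .pair _ _ _ _ h₁.memU h₂.memU hAB
      · refine .step _ rest a b A B (List.Perm.refl _) hr h₁.memU h₂.memU hAB ?_
        rw [← hP, ← hw, inv_smul_smul₀ (by rw [hw]; positivity)]
        exact h
    have h4 := ih₁ _ h3
    have h5 := ih₂ (L₁ ++ rest) (HI_perm h4 (List.perm_middle.symm))
    refine HI_perm h5 ?_
    rw [List.append_assoc]
    exact List.perm_append_comm_assoc _ _ _

theorem Lam.scale {U : Set (Mat N n)} {w A L} (h : Lam U w A L) (c : ℝ) (hc : 0 < c) :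
    Lam U (c * w) A (L.map fun p => (c * p.1, p.2)) := by
  induction h with
  | leaf w ξ hw hξ => exact .leaf _ _ (by positivity) hξ
  | node w a b A B P L₁ L₂ ha hb hw hAB hP hPU h₁ h₂ ih₁ ih₂ =>
    rw [List.map_append]
    refine .node _ (c * a) (c * b) A B P _ _ (by positivity) (by positivity) (by rw [hw]; ring) hAB ?_ hPU ih₁ ih₂
    rw [mul_smul, hP, smul_add, mul_smul, mul_smul]

theorem Lam.pos {U : Set (Mat N n)} {w A L} (h : Lam U w A L) : ∀ p ∈ L, 0 < p.1 := by
  induction h with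
  | leaf w ξ hw hξ => simpa using hw
  | node w a b A B P L₁ L₂ ha hb hw hAB hP hPU h₁ h₂ ih₁ ih₂ =>
    intro p hp
    rcases List.mem_append.1 hp with h | h
    · exact ih₁ p h
    · exact ih₂ p h

theorem Lam.sum {U : Set (Mat N n)} {w A L} (h : Lam U w A L) : (L.map fun p => p.1).sum = w := by
  induction h with
  | leaf w ξ hw hξ => simp
  | node w a b A B P L₁ L₂ ha hb hw hAB hP hPU h₁ h₂ ih₁ ih₂ =>
    rw [List.map_append, List.sum_append, ih₁, ih₂, hw]

theorem Lam.bary {U : Set (Mat N n)} {w A L} (h : Lam U w A L) :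
    (L.map fun p => p.1 • p.2).sum = w • A := by
  induction h with
  | leaf w ξ hw hξ => simp
  | node w a b A B P L₁ L₂ ha hb hw hAB hP hPU h₁ h₂ ih₁ ih₂ =>
    rw [List.map_append, List.sum_append, ih₁, ih₂, hP]

/-- mass outside T -/
noncomputable def mass (T : Set (Mat N n)) (L : List (ℝ × Mat N n)) : ℝ :=
  (L.map fun p => if p.2 ∉ T then p.1 else 0).sum

theorem mass_nonneg {U T : Set (Mat N n)} {w A L} (h : Lam U w A L) : 0 ≤ mass T L := by
  apply List.sum_nonneg
  intro x hx
  obtain ⟨p, hp, rfl⟩ := List.mem_map.1 hx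
  have := h.pos p hp
  split_ifs
  · exact le_rfl
  · exact this.le

theorem mass_scale (T : Set (Mat N n)) (c : ℝ) (L : List (ℝ × Mat N n)) :
    mass T (L.map fun p => (c * p.1, p.2)) = c * mass T L := by
  unfold mass
  rw [List.map_map, ← List.sum_map_mul_left]
  congr 2
  ext p
  simp

/-- the envelope -/
noncomputable def env (U T : Set (Mat N n)) (A : Mat N n) : ℝ :=
  sInf {m | ∃ L, Lam U 1 A L ∧ m = mass T L}

theorem env_bdd (U T : Set (Mat N n)) (A : Mat N n) : BddBelow {m | ∃ L, Lam U 1 A L ∧ m = mass T L} :=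
  ⟨0, by rintro _ ⟨L, h, rfl⟩; exact mass_nonneg h⟩

theorem env_ne (U T : Set (Mat N n)) (A : Mat N n) (hA : A ∈ U) :
    {m | ∃ L, Lam U 1 A L ∧ m = mass T L}.Nonempty :=
  ⟨_, _, .leaf 1 A one_pos hA, rfl⟩

theorem main_claim (K U T : Set (Mat N n)) (hK : IsCompact K) (hU : IsOpen U) (hKU : RcoF K ⊆ U)
    (hKT : K ⊆ T) (ξ : Mat N n) (hξ : ξ ∈ RcoF K) (δ : ℝ) (hδ : 0 < δ) :
    ∃ L, Lam U 1 ξ L ∧ mass T L < δ := by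
  obtain ⟨φ, hφ, hφK, hφU⟩ := exists_sep K U hK hU hKU
  have roc := glue U φ (env U T) hφ hφU (by
      intro x hx
      refine (csInf_le (env_bdd U T x) ⟨_, .leaf 1 x one_pos hx, rfl⟩).trans ?_
      simp only [mass, List.map_cons, List.map_nil, List.sum_cons, List.sum_nil]
      split_ifs <;> norm_num) (by
      intro x hx
      have : {m | ∃ L, Lam U 1 x L ∧ m = mass T L} = ∅ := by
        ext m
        simp only [Set.mem_ofPred_eq, Set.mem_empty_iff_false, iff_false]
        rintro ⟨L, h, _⟩
        exact hx h.memU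
      rw [env, this, Real.sInf_empty]) (by
      intro t ht A hA B hB hAB hP
      have ht1 : 0 < 1 - t := by linarith [ht.2]
      apply le_of_forall_pos_lt_add
      intro ε hε
      obtain ⟨_, ⟨L₁, h₁, rfl⟩, hm₁⟩ := exists_lt_of_csInf_lt (env_ne U T A hA)
        (show env U T A < env U T A + ε by linarith)
      obtain ⟨_, ⟨L₂, h₂, rfl⟩, hm₂⟩ := exists_lt_of_csInf_lt (env_ne U T B hB)
        (show env U T B < env U T B + ε by linarith)
      have s₁ := h₁.scale t ht.1
      have s₂ := h₂.scale (1 - t) ht1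
      rw [mul_one] at s₁ s₂
      have nd := Lam.node 1 t (1 - t) A B (t • A + (1 - t) • B) _ _ ht.1 ht1 (by ring) hAB
        (one_smul _ _) hP s₁ s₂
      have := csInf_le (env_bdd U T _) ⟨_, nd, rfl⟩
      refine lt_of_le_of_lt this ?_
      have e : mass T (L₁.map (fun p => (t * p.1, p.2)) ++ L₂.map (fun p => ((1 - t) * p.1, p.2)))
          = t * mass T L₁ + (1 - t) * mass T L₂ := by
        rw [← mass_scale, ← mass_scale]
        simp only [mass, List.map_append, List.sum_append]
      rw [e]
      have e1 := mul_lt_mul_of_pos_left hm₁ ht.1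
      have e2 := mul_lt_mul_of_pos_left hm₂ ht1
      linarith)
  have hKsub : K ⊆ RcoF K := fun x hx f _ h => h x hx
  have h0 := hξ _ roc (by
    intro x hx
    apply max_le _ (hφK x hx)
    refine csInf_le (env_bdd U T x) ⟨_, .leaf 1 x one_pos (hKU (hKsub hx)), ?_⟩
    simp [mass, hKT hx])
  have h1 : env U T ξ < δ := ((le_max_left _ _).trans h0).trans_lt hδ
  obtain ⟨_, ⟨L, h, rfl⟩, hm⟩ := exists_lt_of_csInf_lt (env_ne U T ξ (hKU hξ)) h1
  exact ⟨L, h, hm⟩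
end

section Statements

open Metric Set

theorem stmt6 {N n : ℕ} (E : Set (Mat N n)) (hE : Bornology.IsBounded E)
    (Eδ : ℝ → Set (Mat N n)) (hEδc : ∀ δ > 0, IsCompact (Eδ δ))
    (hsub : ∀ δ > 0, RcoF (Eδ δ) ⊆ interior (RcoF E))
    (h1 : ∀ ε > 0, ∃ δ₀ > 0, ∀ δ ∈ Set.Ioc (0:ℝ) δ₀, ∀ η ∈ Eδ δ, Metric.infDist η E ≤ ε)
    (h2 : ∀ η ∈ interior (RcoF E), ∃ δ₀ > 0, ∀ δ ∈ Set.Ioc (0:ℝ) δ₀, η ∈ RcoF (Eδ δ)) :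
    ∀ δ > 0, ∀ ξ ∈ RcoF (Eδ δ), ∃ (I : ℕ) (l : Fin I → ℝ) (ξs : Fin I → Mat N n),
      (∀ i, 0 < l i) ∧ ∑ i, l i = 1 ∧ SatisfiesH (interior (RcoF E)) I l ξs ∧
      ξ = ∑ i, l i • ξs i ∧
      ∑ i ∈ Finset.univ.filter (fun i => ξs i ∉ Metric.thickening δ E), l i < δ := by
  intro δ hδ ξ hξ
  have hξU := hsub δ hδ hξ
  have hne : E.Nonempty := by
    by_contra h
    rw [Set.not_nonempty_iff_eq_empty] at h
    subst h
    have := interior_subset hξU (fun _ => 1) (fun a _ x y _ => by simp) (by simp)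
    norm_num at this
  obtain ⟨d1, hd1, h1⟩ := h1 (δ / 2) (by positivity)
  obtain ⟨d2, hd2, h2⟩ := h2 ξ hξU
  have hd : 0 < min d1 d2 := lt_min hd1 hd2
  obtain ⟨L, hL, hm⟩ := main_claim (Eδ (min d1 d2)) (interior (RcoF E)) (Metric.thickening δ E)
    (hEδc _ hd) isOpen_interior (hsub _ hd) (by
      intro η hη
      rw [Metric.mem_thickening_iff_infDist_lt hne]
      have := h1 _ ⟨hd, min_le_left _ _⟩ η hη
      linarith) ξ (h2 _ ⟨hd, min_le_right _ _⟩) δ hδ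
  have hs : ∀ {M : Type} [AddCommMonoid M] (F : ℝ × Mat N n → M),
      ∑ i : Fin L.length, F (L.get i) = (L.map F).sum := by
    intro M _ F
    rw [← List.sum_ofFn]
    congr 1
    conv_rhs => rw [← List.ofFn_get L, List.map_ofFn]
    rfl
  refine ⟨L.length, fun i => (L.get i).1, fun i => (L.get i).2, fun i => hL.pos _ (L.get_mem i),
    ?_, ?_, ?_, ?_⟩
  · exact (hs fun p => p.1).trans hL.sum
  · have := hL.collapse [] (.single _ _ hξU)
    rw [List.append_nil] at this
    unfold SatisfiesH
    convert this using 1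
    exact List.ofFn_get L
  · have := (hs fun p => p.1 • p.2).trans hL.bary
    rw [one_smul] at this
    exact this.symm
  · rw [Finset.sum_filter]
    have := hs fun p => if p.2 ∉ Metric.thickening δ E then p.1 else 0
    refine lt_of_eq_of_lt this hm

end Statements
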